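/- arXiv:math/0412549 — 3 statements merged into one kernel-verified Lean document; each statement's English description precedes it below -/
import Mathlib

section
/- Let A be a unital associative ℂ-algebra and let elements L_{ij} ∈ A (1 ≤ i,j ≤ 3) satisfy the constraint sets Ŝ₁, Ŝ₂ and Ŝ₃. Then the common value C := qL₁₃L₃₁ + q^{1/2}L₂₃L₂₁ + L₃₃L₁₁ of the six Ŝ₃ expressions is central: C·L_{ab} = L_{ab}·C for all 1 ≤ a,b ≤ 3. -/
/-!
Let `g = (s⁻¹, 1, s)` and let `k ↦ k.rev` be the order-reversing involution of the index set.
The constraint sets say exactly that the antidiagonal form with weights `g` is preserved by `L` and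
by its transpose up to the factor `C`:
`∑ i, g i • (L i.rev l * L i k) = δ_{l, k.rev} • g k • C` and
`∑ j, g j • (L l j.rev * L k j) = δ_{l, k.rev} • g k • C`,
where the entries with `l = k.rev` are rescalings of the six quadratic expressions.
Evaluating `∑ i, ∑ j, g i • g j • (L i.rev l * L i j.rev * L m j)` by the first relation gives
`g l.rev • g l • (C * L m l)`, and by the second `g m.rev • g m • (L m l * C)`.
Since `g k.rev * g k = 1`, the element `C` commutes with every `L m l`.
-/

/-- The constraint set Ŝ₁ (1-based indices l+k ≠ 4, i.e. 0-based (l:ℕ)+(k:ℕ) ≠ 2):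
q^{−1/2}L_{3l}L_{1k} + L_{2l}L_{2k} + q^{1/2}L_{1l}L_{3k} = 0, with s = q^{1/2}. -/
def S1hat (s : ℂ) {A : Type*} [Ring A] [Algebra ℂ A]
    (L : Fin 3 → Fin 3 → A) : Prop :=
  ∀ l k : Fin 3, (l : ℕ) + (k : ℕ) ≠ 2 →
    s⁻¹ • (L 2 l * L 0 k) + L 1 l * L 1 k + s • (L 0 l * L 2 k) = 0

/-- The constraint set Ŝ₂:
q^{−1/2}L_{l3}L_{k1} + L_{l2}L_{k2} + q^{1/2}L_{l1}L_{k3} = 0 for l+k ≠ 4 (1-based). -/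
def S2hat (s : ℂ) {A : Type*} [Ring A] [Algebra ℂ A]
    (L : Fin 3 → Fin 3 → A) : Prop :=
  ∀ l k : Fin 3, (l : ℕ) + (k : ℕ) ≠ 2 →
    s⁻¹ • (L l 2 * L k 0) + L l 1 * L k 1 + s • (L l 0 * L k 2) = 0

/-- The constraint set Ŝ₃: the six quadratic expressions E₁,…,E₆ are all equal. -/
def S3hat (q s : ℂ) {A : Type*} [Ring A] [Algebra ℂ A]
    (L : Fin 3 → Fin 3 → A) : Prop :=
  (L 0 0 * L 2 2 + s⁻¹ • (L 1 0 * L 1 2) + q⁻¹ • (L 2 0 * L 0 2)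
      = s • (L 0 1 * L 2 1) + L 1 1 * L 1 1 + s⁻¹ • (L 2 1 * L 0 1)) ∧
  (L 0 0 * L 2 2 + s⁻¹ • (L 1 0 * L 1 2) + q⁻¹ • (L 2 0 * L 0 2)
      = q • (L 0 2 * L 2 0) + s • (L 1 2 * L 1 0) + L 2 2 * L 0 0) ∧
  (L 0 0 * L 2 2 + s⁻¹ • (L 1 0 * L 1 2) + q⁻¹ • (L 2 0 * L 0 2)
      = L 0 0 * L 2 2 + s⁻¹ • (L 0 1 * L 2 1) + q⁻¹ • (L 0 2 * L 2 0)) ∧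
  (L 0 0 * L 2 2 + s⁻¹ • (L 1 0 * L 1 2) + q⁻¹ • (L 2 0 * L 0 2)
      = s • (L 1 0 * L 1 2) + L 1 1 * L 1 1 + s⁻¹ • (L 1 2 * L 1 0)) ∧
  (L 0 0 * L 2 2 + s⁻¹ • (L 1 0 * L 1 2) + q⁻¹ • (L 2 0 * L 0 2)
      = q • (L 2 0 * L 0 2) + s • (L 2 1 * L 0 1) + L 2 2 * L 0 0)

/-- If `L` and its transpose preserve an antidiagonal form with weights `g`, where
`g k.rev * g k = 1`, up to the same factor `C`, then `C` commutes with the entries of `L`. -/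
lemma comm_of_form_relations {A : Type*} [Ring A] [Algebra ℂ A] {n : ℕ} (g : Fin n → ℂ)
    (hg : ∀ k, g k.rev * g k = 1) (L : Fin n → Fin n → A) (C : A)
    (hcol : ∀ l k, ∑ i, g i • (L i.rev l * L i k) = if l = k.rev then g k • C else 0)
    (hrow : ∀ l k, ∑ j, g j • (L l j.rev * L k j) = if l = k.rev then g k • C else 0)
    (m l : Fin n) : C * L m l = L m l * C := by
  have hL : ∑ j, ∑ i, (g j * g i) • (L i.rev l * L i j.rev * L m j) = C * L m l := by
    have h : ∀ j, ∑ i, (g j * g i) • (L i.rev l * L i j.rev * L m j)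
        = if l = j then C * L m j else 0 := by
      intro j
      have := congrArg (fun x => g j • (x * L m j)) (hcol l j.rev)
      simp only [Finset.sum_mul, Finset.smul_sum, smul_mul_assoc, smul_smul, Fin.rev_rev] at this
      rw [this]
      split_ifs
      · rw [smul_mul_assoc, smul_smul, mul_comm, hg, one_smul]
      · simp
    simp [h]
  have hR : ∑ i, ∑ j, (g j * g i) • (L i.rev l * L i j.rev * L m j) = L m l * C := by
    have h : ∀ i, ∑ j, (g j * g i) • (L i.rev l * L i j.rev * L m j)
        = if i = m.rev then L m l * C else 0 := by
      intro i
      have := congrArg (fun x => g i • (L i.rev l * x)) (hrow i m)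
      simp only [Finset.mul_sum, Finset.smul_sum, mul_smul_comm, smul_smul, ← mul_assoc] at this
      simp only [mul_comm (g _) (g i)]
      rw [this]
      split_ifs with him
      · rw [mul_smul_comm, smul_smul, him, hg, one_smul, Fin.rev_rev]
      · simp
    simp [h]
  rw [← hL, ← hR, Finset.sum_comm]

theorem stmt15 {A : Type*} [Ring A] [Algebra ℂ A]
    (q s : ℂ) (hq : q ≠ 0) (hs : s ^ 2 = q)
    (L : Fin 3 → Fin 3 → A)
    (h1 : S1hat s L) (h2 : S2hat s L) (h3 : S3hat q s L) :
    ∀ a b : Fin 3,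
      (q • (L 0 2 * L 2 0) + s • (L 1 2 * L 1 0) + L 2 2 * L 0 0) * L a b =
        L a b * (q • (L 0 2 * L 2 0) + s • (L 1 2 * L 1 0) + L 2 2 * L 0 0) := by
  subst hs
  have s0 : s ≠ 0 := by rintro rfl; simp at hq
  obtain ⟨e2, e3, e4, e5, e6⟩ := h3
  rw [e3] at e2 e4 e5 e6
  generalize hC : s ^ 2 • (L 0 2 * L 2 0) + s • (L 1 2 * L 1 0) + L 2 2 * L 0 0 = C at *
  have r0 : Fin.rev (0 : Fin 3) = 2 := rfl
  have r1 : Fin.rev (1 : Fin 3) = 1 := rfl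
  have r2 : Fin.rev (2 : Fin 3) = 0 := rfl
  have hval : ∀ l k : Fin 3, l ≠ k.rev → (l : ℕ) + (k : ℕ) ≠ 2 := by decide
  refine comm_of_form_relations ![s⁻¹, 1, s] ?_ L C ?_ ?_
  · intro k
    fin_cases k <;> simp [r0, r1, r2, s0]
  · intro l k
    split_ifs with h
    · subst h
      fin_cases k <;> simp [Fin.sum_univ_three, r0, r1, r2]
      · rw [← hC]; match_scalars <;> field_simp
      · rw [e2]; match_scalars <;> field_simp
      · rw [← e3]; match_scalars <;> field_simp
    · simpa [Fin.sum_univ_three, r0, r1, r2] using h1 l k (hval l k h)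
  · intro l k
    split_ifs with h
    · subst h
      fin_cases k <;> simp [Fin.sum_univ_three, r0, r1, r2]
      · rw [e6]; match_scalars <;> field_simp
      · rw [e5]; match_scalars <;> field_simp
      · rw [e4]; match_scalars <;> field_simp
    · simpa [Fin.sum_univ_three, r0, r1, r2] using h2 l k (hval l k h)
end

section
/- Let A and B be unital associative ℂ-algebras, and let (L_{ij}) in A and (L′_{ij}) in B (1 ≤ i,j ≤ 3) each satisfy the constraint sets Ŝ₁, Ŝ₂ and Ŝ₃. In the tensor product algebra A ⊗_ℂ B define the coproduct elements ΔL_{ij} := Σ_{k=1}^3 L_{ik} ⊗ L′_{kj}. Then ΔL₁₁·ΔL₃₃ + q^{−1/2}·ΔL₂₁·ΔL₂₃ + q^{−1}·ΔL₃₁·ΔL₁₃ = (L₁₁L₃₃ + q^{−1/2}L₂₁L₂₃ + q^{−1}L₃₁L₁₃) ⊗ (L′₁₁L′₃₃ + q^{−1/2}L′₂₁L′₂₃ + q^{−1}L′₃₁L′₁₃); that is, the first Ŝ₃ element is group-like with respect to the coproduct. -/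
open scoped TensorProduct

/-- The quadratic form `x₀ y₂ + q^{-1/2} x₁ y₁ + q^{-1} x₂ y₀` on the columns `x`, `y` number `k`
and `m` of `L`, with `s = q^{1/2}`. -/
noncomputable def Q (q s : ℂ) {A : Type*} [Ring A] [Algebra ℂ A]
    (L : Fin 3 → Fin 3 → A) (k m : Fin 3) : A :=
  L 0 k * L 2 m + s⁻¹ • (L 1 k * L 1 m) + q⁻¹ • (L 2 k * L 0 m)

section
variable {A : Type*} [Ring A] [Algebra ℂ A] {q s : ℂ} {L : Fin 3 → Fin 3 → A}

lemma Q_eq_zero (hs0 : s ≠ 0) (hs : s ^ 2 = q) (h1 : S1hat s L) (k m : Fin 3)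
    (hkm : (k : ℕ) + (m : ℕ) ≠ 2) : Q q s L k m = 0 := by
  -- `Q k m` is `s⁻¹` times the corresponding `Ŝ₁` relation.
  have h := congrArg (fun x => s⁻¹ • x) (h1 k m hkm)
  simp only [smul_zero] at h
  rw [← h, Q, ← hs]
  match_scalars <;> field_simp

lemma Q_one_one (hs0 : s ≠ 0) (hs : s ^ 2 = q) (h3 : S3hat q s L) :
    Q q s L 1 1 = s⁻¹ • Q q s L 0 2 := by
  have h : Q q s L 0 2 = _ := h3.1
  rw [h, Q, ← hs]
  match_scalars <;> field_simp

lemma Q_two_zero (hs0 : s ≠ 0) (hs : s ^ 2 = q) (h3 : S3hat q s L) :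
    Q q s L 2 0 = q⁻¹ • Q q s L 0 2 := by
  have h : Q q s L 0 2 = _ := h3.2.1
  rw [h, Q, ← hs]
  match_scalars <;> field_simp

end

theorem stmt16 {A B : Type*} [Ring A] [Algebra ℂ A] [Ring B] [Algebra ℂ B]
    (q s : ℂ) (hq : q ≠ 0) (hs : s ^ 2 = q)
    (L : Fin 3 → Fin 3 → A) (L' : Fin 3 → Fin 3 → B)
    (h1 : S1hat s L) (h2 : S2hat s L) (h3 : S3hat q s L)
    (h1' : S1hat s L') (h2' : S2hat s L') (h3' : S3hat q s L')
    (ΔL : Fin 3 → Fin 3 → A ⊗[ℂ] B)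
    (hΔ : ∀ i j, ΔL i j = ∑ k : Fin 3, L i k ⊗ₜ[ℂ] L' k j) :
    ΔL 0 0 * ΔL 2 2 + s⁻¹ • (ΔL 1 0 * ΔL 1 2) + q⁻¹ • (ΔL 2 0 * ΔL 0 2) =
      (L 0 0 * L 2 2 + s⁻¹ • (L 1 0 * L 1 2) + q⁻¹ • (L 2 0 * L 0 2)) ⊗ₜ[ℂ]
        (L' 0 0 * L' 2 2 + s⁻¹ • (L' 1 0 * L' 1 2) + q⁻¹ • (L' 2 0 * L' 0 2)) := by
  have hs0 : s ≠ 0 := by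
    rintro rfl
    exact hq (by rw [← hs]; simp)
  have expand : ΔL 0 0 * ΔL 2 2 + s⁻¹ • (ΔL 1 0 * ΔL 1 2) + q⁻¹ • (ΔL 2 0 * ΔL 0 2) =
      ∑ k : Fin 3, ∑ m : Fin 3, Q q s L k m ⊗ₜ[ℂ] (L' k 0 * L' m 2) := by
    simp only [hΔ, Finset.sum_mul_sum, Algebra.TensorProduct.tmul_mul_tmul, Finset.smul_sum,
      ← Finset.sum_add_distrib, Q, TensorProduct.add_tmul, TensorProduct.smul_tmul']
  have z := Q_eq_zero hs0 hs h1
  rw [expand]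
  simp only [Fin.sum_univ_three]
  rw [z 0 0 (by decide), z 0 1 (by decide), z 1 0 (by decide), z 1 2 (by decide),
    z 2 1 (by decide), z 2 2 (by decide), Q_one_one hs0 hs h3, Q_two_zero hs0 hs h3]
  simp only [TensorProduct.zero_tmul, zero_add, add_zero, TensorProduct.smul_tmul,
    ← TensorProduct.tmul_add]
  rfl
end

section
/- Let A be a unital associative ℂ-algebra, let q ∈ ℂ be nonzero with chosen square root q^{1/2}, and let λ ∈ ℂ satisfy λ² + (q+1+q^{−1})λ + 1 = 0. Suppose x₁, x₂, x₃ ∈ A satisfy q^{−1/2}x₁x₃ + x₂x₂ + q^{1/2}x₃x₁ = 0. Define the matrices X₁, X₂, X₃ ∈ M₃(A) by X₁ := [[x₁, 0, 0], [x₂, 0, 0], [(1+qλ)x₃, q^{1/2}λx₂, λx₁]], X₂ := [[0, x₁, 0], [q^{1/2}λx₃, (1+λ)x₂, q^{−1/2}λx₁], [0, x₃, 0]], X₃ := [[λx₃, q^{−1/2}λx₂, (1+q^{−1}λ)x₁], [0, 0, x₂], [0, 0, x₃]]. Then q^{−1/2}X₁X₃ + X₂X₂ + q^{1/2}X₃X₁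 = 0 in M₃(A); i.e. the transfer-matrix map x ↦ tx sends solutions of the ô(3) quantum-plane relation to solutions. -/
/-!
With `q = s ^ 2`, each of the nine entries of `s⁻¹ • (X1 * X3) + X2 * X2 + s • (X3 * X1)` is a
combination of monomials `xᵢ * xⱼ`. The off-diagonal entries are single monomials whose coefficient
is `1`, `s` or `s⁻¹` times the quadratic polynomial in `lam` that vanishes by hypothesis. Each
diagonal entry is `lam` times the quantum-plane relation plus such a vanishing term.
-/


theorem stmt19 {A : Type*} [Ring A] [Algebra ℂ A]
    (q s lam : ℂ) (hq : q ≠ 0) (hs : s ^ 2 = q)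
    (hlam : lam ^ 2 + (q + 1 + q⁻¹) * lam + 1 = 0)
    (x1 x2 x3 : A)
    (hx : s⁻¹ • (x1 * x3) + x2 * x2 + s • (x3 * x1) = 0)
    (X1 X2 X3 : Matrix (Fin 3) (Fin 3) A)
    (hX1 : X1 = !![x1, 0, 0;
                   x2, 0, 0;
                   (1 + q * lam) • x3, (s * lam) • x2, lam • x1])
    (hX2 : X2 = !![0, x1, 0;
                   (s * lam) • x3, (1 + lam) • x2, (s⁻¹ * lam) • x1;
                   0, x3, 0])
    (hX3 : X3 = !![lam • x3, (s⁻¹ * lam) • x2, (1 + q⁻¹ * lam) • x1;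
                   0, 0, x2;
                   0, 0, x3]) :
    s⁻¹ • (X1 * X3) + X2 * X2 + s • (X3 * X1) = 0 := by
  subst hs
  have hs0 : s ≠ 0 := fun h => hq (by simp [h])
  subst hX1 hX2 hX3
  ext i j
  fin_cases i <;> fin_cases j <;>
    simp [Matrix.mul_apply, Fin.sum_univ_three, -smul_add]
  · linear_combination (norm := skip) lam • hx + (s * hlam) • (x1 * x3)
    match_scalars <;> field_simp <;> ring
  · linear_combination (norm := skip) hlam • (x1 * x2)
    match_scalars <;> field_simp <;> ring
  · linear_combination (norm := skip) (s⁻¹ * hlam) • (x1 * x1)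
    match_scalars <;> field_simp <;> ring
  · linear_combination (norm := skip) (s * hlam) • (x2 * x3)
    match_scalars <;> field_simp <;> ring
  · linear_combination (norm := skip) lam • hx + hlam • (x2 * x2)
    match_scalars <;> field_simp <;> ring
  · linear_combination (norm := skip) (s⁻¹ * hlam) • (x2 * x1)
    match_scalars <;> field_simp <;> ring
  · linear_combination (norm := skip) (s * hlam) • (x3 * x3)
    match_scalars <;> field_simp <;> ring
  · linear_combination (norm := skip) hlam • (x3 * x2)
    match_scalars <;> field_simp <;> ring
  · linear_combination (norm := skip) lam • hx + (s⁻¹ * hlam) • (x3 * x1)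
    match_scalars <;> field_simp <;> ring
end
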